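/- Let f be a non-constant meromorphic function on ℂ, let c ∈ ℂ, let δ < 1 and let ε > 0. Then m(r, f(z+c)/f(z)) = o( T(r+|c|, f)^{1+ε} / r^δ ) as r → ∞, for all r outside a possible exceptional set E of finite logarithmic measure. -/

import Mathlib

open MeasureTheory Filter Topology Metric

noncomputable section

/-- Positive part of the logarithm: `log⁺ x = max (log x) 0`. -/
def logPlus (x : ℝ) : ℝ := max (Real.log x) 0

/-- The point `r e^{iθ}` on the circle of radius `r`. -/
def circ (r θ : ℝ) : ℂ := (r : ℂ) * Complex.exp (θ * Complex.I)

/-- Nevanlinna proximity function `m(r, f)`. -/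
def nevm (f : ℂ → ℂ) (r : ℝ) : ℝ :=
  (2 * Real.pi)⁻¹ * ∫ θ in (0:ℝ)..(2 * Real.pi), logPlus ‖f (circ r θ)‖

/-- Order of the pole of `f` at `x` (`0` if `f` extends analytically over `x`);
determined through the punctured neighbourhood of `x`. -/
def poleOrd (f : ℂ → ℂ) (x : ℂ) : ℕ :=
  sInf {n : ℕ | ∃ g : ℂ → ℂ, AnalyticAt ℂ g x ∧
    ∀ᶠ w in 𝓝[≠] x, (w - x) ^ n * f w = g w}

/-- Unintegrated counting function `n(r, f)`: number of poles of `f` in `|z| ≤ r`,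
counted with multiplicity. -/
def nevn (f : ℂ → ℂ) (r : ℝ) : ℕ := ∑ᶠ z ∈ closedBall (0:ℂ) r, poleOrd f z

/-- Integrated counting function `N(r, f)`. -/
def nevN (f : ℂ → ℂ) (r : ℝ) : ℝ :=
  (∫ t in (0:ℝ)..r, ((nevn f t : ℝ) - (nevn f 0 : ℝ)) / t) + (nevn f 0 : ℝ) * Real.log r

/-- Nevanlinna characteristic `T(r, f) = m(r, f) + N(r, f)`. -/
def nevT (f : ℂ → ℂ) (r : ℝ) : ℝ := nevm f r + nevN f r

/-- A subset of `(0, ∞)` has finite logarithmic measure: `∫_E dr/r < ∞`. -/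
def FinLogMeasure (E : Set ℝ) : Prop :=
  E ⊆ Set.Ioi 0 ∧ ∫⁻ r in E, ENNReal.ofReal r⁻¹ < ⊤

/-- `f` is a non-constant function. -/
def Nonconstant (f : ℂ → ℂ) : Prop := ¬ ∃ a : ℂ, ∀ z : ℂ, f z = a

/-- `f` has finite order: `limsup_{r→∞} log T(r,f) / log r < ∞`. -/
def FiniteOrder (f : ℂ → ℂ) : Prop :=
  IsBoundedUnder (· ≤ ·) atTop fun r : ℝ => Real.log (nevT f r) / Real.log r

end

open ValueDistribution MeromorphicOn

/-!
The Poisson–Jensen formula writes `log |f (z + c)| - log |f z|` as a circle mean of `log |f|`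
against a difference of Poisson kernels plus a sum of differences of canonical factors over the
zeros and poles of `f`. Each of the latter is controlled by negative powers `|z - a| ^ (-α)` with
`α < 1`, whose mean over `|z| = r` is `O(r ^ (-α))` uniformly in `a`. The first main theorem bounds
both the mean of `|log |f||` and the number of zeros and poles by the characteristic at a slightly
larger radius, and Borel's growth lemma removes that enlargement outside a set of finite logarithmic
measure.
-/

lemma nevm_eq_proximity (f : ℂ → ℂ) (r : ℝ) : nevm f r = proximity f ⊤ r := by
  simp only [proximity_top, nevm, Real.circleAverage, smul_eq_mul, circ, circleMap, zero_add,
    logPlus, Real.posLog, max_comm]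

lemma meromorphicOrderAt_sub_pow_mul {f : ℂ → ℂ} {x : ℂ} (hf : MeromorphicAt f x) (n : ℕ) :
    meromorphicOrderAt (fun w => (w - x) ^ n * f w) x
      = (n : WithTop ℤ) + meromorphicOrderAt f x := by
  have hpow : meromorphicOrderAt (fun w => (w - x) ^ n) x = (n : WithTop ℤ) := by
    change meromorphicOrderAt ((fun w : ℂ => w - x) ^ n) x = n
    rw [meromorphicOrderAt_pow (by fun_prop), meromorphicOrderAt_id_sub_const, mul_one]
  rw [fun_meromorphicOrderAt_mul (by fun_prop) hf, hpow]

lemma poleOrd_eq_toNat_neg_order {f : ℂ → ℂ} {x : ℂ} (hf : MeromorphicAt f x) :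
    poleOrd f x = (-(meromorphicOrderAt f x).untop₀).toNat := by
  have hset (n : ℕ) : (∃ g : ℂ → ℂ, AnalyticAt ℂ g x ∧ ∀ᶠ w in 𝓝[≠] x, (w - x) ^ n * f w = g w) ↔
      0 ≤ (n : WithTop ℤ) + meromorphicOrderAt f x := by
    rw [← meromorphicOrderAt_sub_pow_mul hf n,
      MeromorphicAt.meromorphicOrderAt_nonneg_iff (by fun_prop)]
    rfl
  simp only [poleOrd, hset]
  cases meromorphicOrderAt f x with
  | top => simp
  | coe k =>
    have hIci : {n : ℕ | 0 ≤ (n : WithTop ℤ) + (k : WithTop ℤ)} = Set.Ici (-k).toNat := by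
      ext n
      have hcast : (n : WithTop ℤ) + (k : WithTop ℤ) = ((n + k : ℤ) : WithTop ℤ) := rfl
      rw [Set.mem_ofPred_eq, hcast, ← WithTop.coe_zero, WithTop.coe_le_coe, Set.mem_Ici]
      omega
    rw [hIci, csInf_Ici, WithTop.untop₀_coe]

lemma negPart_divisor_univ_apply {f : ℂ → ℂ} (hf : Meromorphic f) (x : ℂ) :
    (divisor f Set.univ)⁻ x = (poleOrd f x : ℤ) := by
  rw [poleOrd_eq_toNat_neg_order (hf x), Function.locallyFinsuppWithin.negPart_apply,
    divisor_apply hf.meromorphicOn (Set.mem_univ x), Int.toNat_eq_max]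
  rfl

lemma intervalIntegrable_indicator_Ici_inv {a : ℝ} (ha : 0 < a) {r : ℝ} (hr : 0 ≤ r) :
    IntervalIntegrable ((Set.Ici a).indicator fun t => t⁻¹) volume 0 r := by
  rw [intervalIntegrable_iff_integrableOn_Ioc_of_le hr, IntegrableOn,
    integrable_indicator_iff measurableSet_Ici, IntegrableOn,
    Measure.restrict_restrict measurableSet_Ici]
  have hcont : ContinuousOn (fun t : ℝ => t⁻¹) (Set.Icc a r) :=
    continuousOn_inv₀.mono fun t ht => (ha.trans_le ht.1).ne'
  exact hcont.integrableOn_Icc.mono_set fun t ht => ⟨ht.1, ht.2.2⟩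

lemma integral_indicator_Ici_inv {a r : ℝ} (ha : 0 < a) (har : a ≤ r) :
    ∫ t in (0 : ℝ)..r, (Set.Ici a).indicator (fun t => t⁻¹) t = Real.log (r / a) := by
  have hinter : Set.Ioc 0 r ∩ Set.Ici a = Set.Icc a r := by
    ext t
    exact ⟨fun ht => ⟨ht.2, ht.1.2⟩, fun ht => ⟨⟨ha.trans_le ht.1, ht.2⟩, ht.1⟩⟩
  rw [intervalIntegral.integral_of_le (ha.le.trans har), setIntegral_indicator measurableSet_Ici,
    hinter, integral_Icc_eq_integral_Ioc, ← intervalIntegral.integral_of_le har,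
    integral_inv_of_pos ha (ha.trans_le har)]

section LogCounting

variable {E : Type*} [NormedAddCommGroup E]

lemma finsum_closedBall_sub_apply_zero (D : Function.locallyFinsupp E ℤ) {S : Finset E} {r t : ℝ}
    (hS : (S : Set E) = (Function.support D ∩ closedBall 0 r) \ {0}) (ht : 0 ≤ t) (htr : t ≤ r) :
    ((∑ᶠ z ∈ closedBall (0 : E) t, D z : ℤ) : ℝ) - D 0
      = ∑ z ∈ S, (Set.Ici ‖z‖).indicator (fun _ => (D z : ℝ)) t := by
  classical
  have hmem (z : E) : z ∈ S ↔ (D z ≠ 0 ∧ ‖z‖ ≤ r) ∧ z ≠ 0 := by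
    rw [← Finset.mem_coe, hS]; simp
  have hzero : (0 : E) ∉ S := by simp [hmem]
  have hsum : ∑ᶠ z ∈ closedBall (0 : E) t, D z
      = ∑ z ∈ insert 0 S with ‖z‖ ≤ t, D z := by
    refine finsum_mem_eq_sum_of_inter_support_eq _ ?_
    ext z
    simp only [Set.mem_inter_iff, mem_closedBall_zero_iff, Function.mem_support, ne_eq,
      Finset.coe_filter, Finset.mem_insert, hmem, Set.mem_ofPred_eq]
    by_cases hz : z = 0
    · simp [hz]
    · constructor
      · exact fun h => ⟨⟨Or.inr ⟨⟨h.2, h.1.trans htr⟩, hz⟩, h.1⟩, h.2⟩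
      · exact fun h => ⟨h.1.2, h.2⟩
  rw [hsum, Finset.sum_filter, Finset.sum_insert hzero, if_pos (by simpa using ht)]
  push_cast
  simp only [Set.indicator_apply, Set.mem_Ici, add_sub_cancel_left]

variable [ProperSpace E]

lemma finite_support_inter_closedBall (D : Function.locallyFinsupp E ℤ) (r : ℝ) :
    (Function.support D ∩ closedBall 0 r).Finite := by
  refine ((D.toClosedBall r).finiteSupport (isCompact_closedBall 0 |r|)).subset ?_
  rintro z ⟨hzD, hzr⟩
  have hz : z ∈ closedBall (0 : E) |r| := closedBall_subset_closedBall (le_abs_self r) hzr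
  rwa [Function.mem_support, Function.locallyFinsuppWithin.toClosedBall_eval_within D hz]

lemma logCounting_eq_sum (D : Function.locallyFinsupp E ℤ) {S : Finset E} {r : ℝ}
    (hS : (S : Set E) = (Function.support D ∩ closedBall 0 r) \ {0}) (hr : 0 < r) :
    Function.locallyFinsuppWithin.logCounting D r
      = ∑ z ∈ S, D z * Real.log (r / ‖z‖) + D 0 * Real.log r := by
  simp only [Function.locallyFinsuppWithin.logCounting, AddMonoidHom.coe_mk, ZeroHom.coe_mk]
  congr 1
  rw [finsum_eq_sum_of_support_subset (s := S)]
  · refine Finset.sum_congr rfl fun z hz => ?_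
    have hzS : z ∈ (Function.support D ∩ closedBall 0 r) \ {0} := hS ▸ Finset.mem_coe.2 hz
    rw [Function.locallyFinsuppWithin.toClosedBall_eval_within D
      (by simpa [abs_of_pos hr] using hzS.1.2), div_eq_mul_inv]
  · intro z hz
    have hterm := Function.mem_support.1 hz
    have hball : z ∈ closedBall (0 : E) |r| := by
      by_contra hout
      simp [Function.locallyFinsuppWithin.apply_eq_zero_of_notMem _ hout] at hterm
    rw [Function.locallyFinsuppWithin.toClosedBall_eval_within D hball] at hterm
    rw [hS]
    refine ⟨⟨fun hDz => hterm (by simp [hDz]), by rwa [abs_of_pos hr] at hball⟩, ?_⟩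
    rintro rfl
    simp at hterm

lemma logCounting_eq_integral_finsum (D : Function.locallyFinsupp E ℤ) {r : ℝ} (hr : 0 < r) :
    Function.locallyFinsuppWithin.logCounting D r =
      (∫ t in (0 : ℝ)..r, (((∑ᶠ z ∈ closedBall (0 : E) t, D z : ℤ) : ℝ) - D 0) / t)
        + D 0 * Real.log r := by
  obtain ⟨S, hS⟩ := ((finite_support_inter_closedBall D r).sdiff (t := {0})).exists_finset_coe
  have hSmem : ∀ z ∈ S, 0 < ‖z‖ ∧ ‖z‖ ≤ r := fun z hz => by
    have hzS : z ∈ (Function.support D ∩ closedBall 0 r) \ {0} := hS ▸ Finset.mem_coe.2 hz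
    exact ⟨norm_pos_iff.2 hzS.2, mem_closedBall_zero_iff.1 hzS.1.2⟩
  have hintegrand : Set.EqOn (fun t => (((∑ᶠ z ∈ closedBall (0 : E) t, D z : ℤ) : ℝ) - D 0) / t)
      (fun t => ∑ z ∈ S, (D z : ℝ) * (Set.Ici ‖z‖).indicator (fun t => t⁻¹) t)
      (Set.uIcc 0 r) := fun t ht => by
    rw [Set.uIcc_of_le hr.le] at ht
    simp only [finsum_closedBall_sub_apply_zero D hS ht.1 ht.2, div_eq_mul_inv,
      Finset.sum_mul, Set.indicator_apply, ite_mul, mul_ite, zero_mul, mul_zero]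
  rw [logCounting_eq_sum D hS hr, intervalIntegral.integral_congr hintegrand,
    intervalIntegral.integral_finsetSum fun z hz =>
      (intervalIntegrable_indicator_Ici_inv (hSmem z hz).1 hr.le).const_mul _]
  congr 1
  refine Finset.sum_congr rfl fun z hz => ?_
  rw [intervalIntegral.integral_const_mul,
    integral_indicator_Ici_inv (hSmem z hz).1 (hSmem z hz).2]

end LogCounting

lemma nevN_eq_logCounting {f : ℂ → ℂ} (hf : Meromorphic f) {r : ℝ} (hr : 0 < r) :
    nevN f r = logCounting f ⊤ r := by
  have hn (t : ℝ) :
      ((∑ᶠ z ∈ closedBall (0 : ℂ) t, (divisor f Set.univ)⁻ z : ℤ) : ℝ) = nevn f t := by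
    rw [nevn, ← Int.cast_natCast, ← Nat.coe_castAddMonoidHom]
    simp only [negPart_divisor_univ_apply hf,
      (Nat.castAddMonoidHom ℤ).map_finsum_of_injective Nat.cast_injective]
    rfl
  have hn0 : (nevn f 0 : ℝ) = ((divisor f Set.univ)⁻ 0 : ℤ) := by
    simp [nevn, negPart_divisor_univ_apply hf]
  rw [logCounting_top, logCounting_eq_integral_finsum _ hr]
  simp only [hn, nevN, hn0]

lemma nevT_eq_characteristic {f : ℂ → ℂ} (hf : Meromorphic f) {r : ℝ} (hr : 0 < r) :
    nevT f r = characteristic f ⊤ r := by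
  simp only [nevT, characteristic, Pi.add_apply, nevm_eq_proximity, nevN_eq_logCounting hf hr]

lemma eventually_codiscrete_add_const {G : Type*} [AddGroup G] [TopologicalSpace G]
    [ContinuousAdd G] {P : G → Prop} (hP : ∀ᶠ z in codiscrete G, P z) (c : G) :
    ∀ᶠ z in codiscrete G, P (z + c) := by
  simp only [Filter.Eventually, codiscrete, mem_codiscreteWithin_iff_forall_mem_nhdsNE,
    Set.compl_univ, Set.union_empty] at hP ⊢
  intro x _
  have hshift : Tendsto (fun z => z + c) (𝓝[≠] x) (𝓝[≠] (x + c)) :=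
    (continuous_add_const c).continuousWithinAt.tendsto_nhdsWithin fun z hz => by simpa using hz
  exact hshift (hP (x + c) trivial)

lemma eventually_codiscreteWithin_analyticAt_and_ne_zero {f : ℂ → ℂ} {U : Set ℂ}
    (hf : MeromorphicOn f U) (hord : ∀ z ∈ U, meromorphicOrderAt f z ≠ ⊤) :
    ∀ᶠ z in codiscreteWithin U, AnalyticAt ℂ f z ∧ f z ≠ 0 :=
  (eventually_codiscreteWithin_analyticAt f hf).and
    (hf.eventually_codiscreteWithin_apply_ne_zero hord)

lemma circleAverage_mono_of_codiscreteWithin {c : ℂ} {r : ℝ} (hr : r ≠ 0) {u v : ℂ → ℝ}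
    (hu : CircleIntegrable u c r) (hv : CircleIntegrable v c r)
    (h : ∀ᶠ z in codiscreteWithin (sphere c |r|), u z ≤ v z) :
    Real.circleAverage u c r ≤ Real.circleAverage v c r := by
  refine mul_le_mul_of_nonneg_left ?_ (by positivity)
  refine intervalIntegral.integral_mono_ae_restrict (by positivity) hu hv ?_
  exact ae_restrict_le_codiscreteWithin measurableSet_Icc
    (codiscreteWithin_mono (Set.subset_univ _) (circleMap_preimage_codiscrete hr h))

lemma circleIntegrable_re_herglotzRieszKernel_smul {u : ℂ → ℝ} {c w : ℂ} {R : ℝ}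
    (hu : CircleIntegrable u c R) (hw : w ∈ ball c R) :
    CircleIntegrable ((Complex.re ∘ herglotzRieszKernel c w) • u) c R :=
  hu.continuousOn_smul
    (Complex.continuous_re.comp_continuousOn (continuousOn_herglotzRieszKernel_sphere hw))

/-- The logarithmic potential `∑ D i * log ‖z - i‖` of a divisor `D` on the plane; it is only
meaningful when `D` has finite support, as otherwise the `finsum` is `0`. -/
noncomputable def logPotential (D : ℂ → ℤ) (z : ℂ) : ℝ := ∑ᶠ i, D i * Real.log ‖z - i‖

lemma logPotential_eq_sum {D : ℂ → ℤ} (hD : D.support.Finite) :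
    logPotential D = ∑ i ∈ hD.toFinset, (D i : ℝ) • fun z => Real.log ‖z - i‖ := by
  ext z
  rw [logPotential, finsum_eq_sum_of_support_subset (s := hD.toFinset) _ fun i hi => by
    simpa using fun h => hi (by simp [h])]
  simp

lemma circleIntegrable_logPotential {D : ℂ → ℤ} (hD : D.support.Finite) (c : ℂ) (R : ℝ) :
    CircleIntegrable (logPotential D) c R := by
  rw [logPotential_eq_sum hD]
  exact CircleIntegrable.sum _ fun i _ =>
    CircleIntegrable.const_smul (circleIntegrable_log_norm_sub_const R)

lemma circleAverage_re_herglotzRieszKernel_smul_logPotential {D : ℂ → ℤ} {R : ℝ} {w : ℂ}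
    (hD : D.support.Finite) (hDR : D.support ⊆ sphere 0 R) (hw : w ∈ ball (0 : ℂ) R) :
    Real.circleAverage ((Complex.re ∘ herglotzRieszKernel 0 w) • logPotential D) 0 R
      = logPotential D w := by
  have hint : ∀ i ∈ hD.toFinset, CircleIntegrable ((Complex.re ∘ herglotzRieszKernel 0 w) •
      (D i : ℝ) • fun z => Real.log ‖z - i‖) 0 R := fun i _ =>
    circleIntegrable_re_herglotzRieszKernel_smul
      (CircleIntegrable.const_smul (circleIntegrable_log_norm_sub_const R)) hw
  rw [logPotential_eq_sum hD, Finset.smul_sum, Real.circleAverage_sum hint, Finset.sum_apply]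
  refine Finset.sum_congr rfl fun i hi => ?_
  have hi : i ∈ sphere (0 : ℂ) R := hDR ((Set.Finite.mem_toFinset _).1 hi)
  rw [smul_comm, Real.circleAverage_smul]
  exact congrArg ((D i : ℝ) • ·) (circleAverage_re_herglotzRieszKernel_mul_log hi hw)

lemma finsum_divisor_ball_mul_log_canonicalFactor_of_mem_sphere {f : ℂ → ℂ} {R : ℝ} {z : ℂ}
    (hz : z ∈ sphere (0 : ℂ) R) :
    ∑ᶠ i, divisor f (ball 0 R) i * Real.log ‖Complex.canonicalFactor R i z‖ = 0 := by
  refine finsum_eq_zero_of_forall_eq_zero fun i => ?_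
  by_cases hi : i ∈ ball (0 : ℂ) R
  · simp [Complex.norm_canonicalFactor_eval_circle_eq_one hi hz]
  · simp [Function.locallyFinsuppWithin.apply_eq_zero_of_notMem _ hi]

lemma log_norm_eq_of_ecanonicalDecomp {f h : ℂ → ℂ} {R : ℝ} {z : ℂ}
    (hdecomp : Complex.ECanonicalDecomp f h R) (hR : 0 < R) (hz : z ∈ closedBall (0 : ℂ) R)
    (hfz : AnalyticAt ℂ f z) (hfz0 : f z ≠ 0) :
    Real.log ‖f z‖ = Real.log ‖h z‖ + logPotential (divisor f (sphere 0 R)) z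
      - ∑ᶠ i, divisor f (ball 0 R) i * Real.log ‖Complex.canonicalFactor R i z‖ := by
  have hzero : meromorphicOrderAt f z = 0 := by
    rw [hfz.meromorphicOrderAt_eq, hfz.analyticOrderAt_eq_zero.2 hfz0]; rfl
  rw [hdecomp.log_norm_eq hz hzero hR, hfz.meromorphicTrailingCoeffAt_of_ne_zero hfz0, logPotential]
  ring

/- Poles and zeros on the boundary circle do not contribute: the Poisson kernel reproduces their
logarithmic potentials. -/
theorem log_norm_eq_circleAverage_sub_finsum_log_canonicalFactor {f : ℂ → ℂ} {R : ℝ}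
    (hf : MeromorphicOn f (closedBall 0 R))
    (hord : ∀ z ∈ closedBall (0 : ℂ) R, meromorphicOrderAt f z ≠ ⊤)
    {w : ℂ} (hw : w ∈ ball (0 : ℂ) R) (hfw : AnalyticAt ℂ f w) (hfw0 : f w ≠ 0) :
    Real.log ‖f w‖ = Real.circleAverage
        ((Complex.re ∘ herglotzRieszKernel 0 w) • fun z => Real.log ‖f z‖) 0 R
      - ∑ᶠ i, divisor f (ball 0 R) i * Real.log ‖Complex.canonicalFactor R i w‖ := by
  have hR : 0 < R := pos_of_mem_ball hw
  obtain ⟨h, hdecomp⟩ := hf.exists_ecanonicalDecomp fun u => hord u u.2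
  have hharm : InnerProductSpace.HarmonicOnNhd (fun z => Real.log ‖h z‖) (closedBall 0 R) :=
    fun z hz => (hdecomp.analyticOnNhd z hz).harmonicAt_log_norm (hdecomp.ne_zero z hz)
  have hlogh : CircleIntegrable (fun z => Real.log ‖h z‖) 0 R := by
    refine MeromorphicOn.circleIntegrable_log_norm fun z hz => ?_
    rw [abs_of_pos hR] at hz
    exact (hdecomp.analyticOnNhd z (sphere_subset_closedBall hz)).meromorphicAt
  set D := divisor f (sphere 0 R)
  have hD : D.support.Finite := divisor_sphere_support_finite
  have hboundary : ((Complex.re ∘ herglotzRieszKernel 0 w) • fun z => Real.log ‖f z‖)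
      =ᶠ[codiscreteWithin (sphere 0 |R|)] (Complex.re ∘ herglotzRieszKernel 0 w) •
        ((fun z => Real.log ‖h z‖) + logPotential D) := by
    rw [abs_of_pos hR]
    filter_upwards [codiscreteWithin_mono sphere_subset_closedBall
      (eventually_codiscreteWithin_analyticAt_and_ne_zero hf hord),
      self_mem_codiscreteWithin (sphere (0 : ℂ) R)] with z hz hzR
    simp only [Pi.smul_apply', Pi.add_apply,
      log_norm_eq_of_ecanonicalDecomp hdecomp hR (sphere_subset_closedBall hzR) hz.1 hz.2,
      finsum_divisor_ball_mul_log_canonicalFactor_of_mem_sphere hzR, sub_zero, D]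
  rw [Real.circleAverage_congr_codiscreteWithin hboundary hR.ne', smul_add,
    Real.circleAverage_add (circleIntegrable_re_herglotzRieszKernel_smul hlogh hw)
      (circleIntegrable_re_herglotzRieszKernel_smul (circleIntegrable_logPotential hD 0 R) hw),
    hharm.circleAverage_re_herglotzRieszKernel_smul hw,
    circleAverage_re_herglotzRieszKernel_smul_logPotential hD D.supportWithinDomain hw,
    log_norm_eq_of_ecanonicalDecomp hdecomp hR (ball_subset_closedBall hw) hfw hfw0]

section DifferenceEstimates

variable {R s α : ℝ} {z w : ℂ}

lemma abs_re_herglotzRieszKernel_sub_le {ζ : ℂ} (hsR : s < R) (hz : ‖z‖ ≤ s) (hw : ‖w‖ ≤ s)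
    (hζ : ‖ζ‖ = R) :
    |(herglotzRieszKernel 0 w ζ).re - (herglotzRieszKernel 0 z ζ).re|
      ≤ 2 * R * ‖w - z‖ / (R - s) ^ 2 := by
  have hR : 0 ≤ R := hζ ▸ norm_nonneg ζ
  have hpos : 0 < R - s := sub_pos.2 hsR
  have hz' : R - s ≤ ‖ζ - z‖ := by linarith [norm_sub_norm_le ζ z]
  have hw' : R - s ≤ ‖ζ - w‖ := by linarith [norm_sub_norm_le ζ w]
  have hζz : ζ - z ≠ 0 := norm_pos_iff.1 (hpos.trans_le hz')
  have hζw : ζ - w ≠ 0 := norm_pos_iff.1 (hpos.trans_le hw')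
  have hdiff : herglotzRieszKernel 0 w ζ - herglotzRieszKernel 0 z ζ
      = 2 * ζ * (w - z) / ((ζ - w) * (ζ - z)) := by
    simp only [herglotzRieszKernel_def, sub_zero]
    field_simp
    ring
  calc |(herglotzRieszKernel 0 w ζ).re - (herglotzRieszKernel 0 z ζ).re|
      ≤ ‖2 * ζ * (w - z) / ((ζ - w) * (ζ - z))‖ := by
        rw [← Complex.sub_re, hdiff]
        exact Complex.abs_re_le_norm _
    _ = 2 * ‖ζ‖ * ‖w - z‖ / (‖ζ - w‖ * ‖ζ - z‖) := by simp
    _ ≤ 2 * R * ‖w - z‖ / (R - s) ^ 2 := by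
        rw [hζ, pow_two]
        gcongr

lemma circleAverage_re_herglotzRieszKernel_smul_sub_le {u : ℂ → ℝ} (hu : CircleIntegrable u 0 R)
    (hsR : s < R) (hz : ‖z‖ ≤ s) (hw : ‖w‖ ≤ s) :
    Real.circleAverage ((Complex.re ∘ herglotzRieszKernel 0 w) • u) 0 R
        - Real.circleAverage ((Complex.re ∘ herglotzRieszKernel 0 z) • u) 0 R
      ≤ 2 * R * ‖w - z‖ / (R - s) ^ 2 * Real.circleAverage (fun ζ => |u ζ|) 0 R := by
  have hKw := circleIntegrable_re_herglotzRieszKernel_smul hu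
    (mem_ball_zero_iff.2 (hw.trans_lt hsR))
  have hKz := circleIntegrable_re_herglotzRieszKernel_smul hu
    (mem_ball_zero_iff.2 (hz.trans_lt hsR))
  have hR : 0 ≤ R := (norm_nonneg z).trans (hz.trans hsR.le)
  rw [← Real.circleAverage_sub hKw hKz, ← smul_eq_mul, ← Real.circleAverage_fun_smul]
  refine Real.circleAverage_mono (hKw.sub hKz) hu.abs.const_fun_smul fun ζ hζ => ?_
  rw [abs_of_nonneg hR, mem_sphere_zero_iff_norm] at hζ
  calc (herglotzRieszKernel 0 w ζ).re * u ζ - (herglotzRieszKernel 0 z ζ).re * u ζ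
      ≤ |(herglotzRieszKernel 0 w ζ).re - (herglotzRieszKernel 0 z ζ).re| * |u ζ| := by
        rw [← sub_mul, ← abs_mul]
        exact le_abs_self _
    _ ≤ 2 * R * ‖w - z‖ / (R - s) ^ 2 * |u ζ| := by
        gcongr
        exact abs_re_herglotzRieszKernel_sub_le hsR hz hw hζ

/- Concavity in the form `log (1 + x) = α⁻¹ log ((1 + x) ^ α) ≤ α⁻¹ x ^ α` trades the logarithmic
singularity at `b = 0` for a power `b ^ (-α)` whose circle means decay. -/
lemma log_sub_log_le_rpow_mul_rpow_neg {a b d : ℝ} (ha : 0 < a) (hb : 0 < b) (hd : 0 ≤ d)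
    (hab : a ≤ b + d) (hα : 0 < α) (hα1 : α ≤ 1) :
    Real.log a - Real.log b ≤ d ^ α / α * b ^ (-α) := by
  have hratio : a / b ≤ 1 + d / b := by
    rw [div_le_iff₀ hb, add_mul, one_mul, div_mul_cancel₀ d hb.ne']
    exact hab
  have hsubadd : (1 + d / b) ^ α ≤ 1 + (d / b) ^ α := by
    simpa using Real.rpow_add_le_add_rpow zero_le_one (div_nonneg hd hb.le) hα.le hα1
  calc Real.log a - Real.log b = Real.log (a / b) := (Real.log_div ha.ne' hb.ne').symm
    _ ≤ Real.log (1 + d / b) := Real.log_le_log (by positivity) hratio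
    _ = α⁻¹ * Real.log ((1 + d / b) ^ α) := by
        rw [Real.log_rpow (by positivity), inv_mul_cancel_left₀ hα.ne']
    _ ≤ α⁻¹ * (d / b) ^ α := by
        gcongr
        linarith [Real.log_le_sub_one_of_pos (x := (1 + d / b) ^ α) (by positivity)]
    _ = d ^ α / α * b ^ (-α) := by
        rw [Real.div_rpow hd hb.le, Real.rpow_neg hb.le]
        ring

lemma mul_sub_le_norm_sq_sub_conj_mul {i : ℂ} (hi : i ∈ ball (0 : ℂ) R) (hz : ‖z‖ ≤ s) :
    R * (R - s) ≤ ‖(R : ℂ) ^ 2 - (starRingEnd ℂ) i * z‖ := by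
  have hiz : ‖i‖ * ‖z‖ ≤ R * s := by
    gcongr
    · exact (norm_nonneg i).trans (mem_ball_zero_iff.1 hi).le
    · exact (mem_ball_zero_iff.1 hi).le
  calc R * (R - s) ≤ R ^ 2 - ‖i‖ * ‖z‖ := by linarith
    _ = ‖(R : ℂ) ^ 2‖ - ‖(starRingEnd ℂ) i * z‖ := by simp
    _ ≤ ‖(R : ℂ) ^ 2 - (starRingEnd ℂ) i * z‖ := norm_sub_norm_le _ _

lemma log_norm_sq_sub_conj_mul_sub_le {i : ℂ} (hi : i ∈ ball (0 : ℂ) R) (hsR : s < R)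
    (hz : ‖z‖ ≤ s) (hw : ‖w‖ ≤ s) :
    Real.log ‖(R : ℂ) ^ 2 - (starRingEnd ℂ) i * w‖ - Real.log ‖(R : ℂ) ^ 2 - (starRingEnd ℂ) i * z‖
      ≤ ‖w - z‖ / (R - s) := by
  have hR : 0 < R := pos_of_mem_ball hi
  have hpos : 0 < R * (R - s) := mul_pos hR (sub_pos.2 hsR)
  have hlow := mul_sub_le_norm_sq_sub_conj_mul hi hz
  have hw0 := hpos.trans_le (mul_sub_le_norm_sq_sub_conj_mul hi hw)
  set a := ‖(R : ℂ) ^ 2 - (starRingEnd ℂ) i * w‖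
  set b := ‖(R : ℂ) ^ 2 - (starRingEnd ℂ) i * z‖
  have hb : 0 < b := hpos.trans_le hlow
  have hab : a - b ≤ R * ‖w - z‖ := by
    refine (norm_sub_norm_le _ _).trans ?_
    rw [sub_sub_sub_cancel_left, ← mul_sub, norm_mul, Complex.norm_conj, norm_sub_rev]
    gcongr
    exact (mem_ball_zero_iff.1 hi).le
  calc Real.log a - Real.log b = Real.log (a / b) := (Real.log_div hw0.ne' hb.ne').symm
    _ ≤ a / b - 1 := Real.log_le_sub_one_of_pos (by positivity)
    _ = (a - b) / b := div_sub_one hb.ne'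
    _ ≤ R * ‖w - z‖ / (R * (R - s)) := by gcongr
    _ = ‖w - z‖ / (R - s) := mul_div_mul_left _ _ hR.ne'

lemma log_norm_canonicalFactor {i : ℂ} (hi : i ∈ ball (0 : ℂ) R) (hz : z ∈ ball (0 : ℂ) R)
    (hzi : z ≠ i) :
    Real.log ‖Complex.canonicalFactor R i z‖
      = Real.log ‖(R : ℂ) ^ 2 - (starRingEnd ℂ) i * z‖ - Real.log R - Real.log ‖z - i‖ := by
  have hR : 0 < R := pos_of_mem_ball hi
  have hnum : 0 < ‖(R : ℂ) ^ 2 - (starRingEnd ℂ) i * z‖ :=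
    (mul_pos hR (sub_pos.2 (mem_ball_zero_iff.1 hz))).trans_le
      (mul_sub_le_norm_sq_sub_conj_mul hi le_rfl)
  have hden : 0 < ‖z - i‖ := norm_pos_iff.2 (sub_ne_zero.2 hzi)
  rw [Complex.canonicalFactor_apply, norm_div, norm_mul, Complex.norm_real,
    Real.norm_of_nonneg hR.le, Real.log_div hnum.ne' (by positivity),
    Real.log_mul hR.ne' hden.ne', sub_sub]

lemma log_norm_canonicalFactor_sub_le {i : ℂ} (hi : i ∈ ball (0 : ℂ) R) (hsR : s < R)
    (hz : ‖z‖ ≤ s) (hw : ‖w‖ ≤ s) (hzi : z ≠ i) (hwi : w ≠ i) (hα : 0 < α) (hα1 : α ≤ 1) :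
    Real.log ‖Complex.canonicalFactor R i w‖ - Real.log ‖Complex.canonicalFactor R i z‖
      ≤ ‖w - z‖ ^ α / α * ‖w - i‖ ^ (-α) + ‖w - z‖ / (R - s) := by
  have hdist : ‖z - i‖ ≤ ‖w - i‖ + ‖w - z‖ := by
    linarith [norm_sub_le_norm_sub_add_norm_sub z w i, norm_sub_rev z w]
  have hnear : Real.log ‖z - i‖ - Real.log ‖w - i‖ ≤ ‖w - z‖ ^ α / α * ‖w - i‖ ^ (-α) :=
    log_sub_log_le_rpow_mul_rpow_neg (norm_pos_iff.2 (sub_ne_zero.2 hzi))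
      (norm_pos_iff.2 (sub_ne_zero.2 hwi)) (norm_nonneg _) hdist hα hα1
  rw [log_norm_canonicalFactor hi (mem_ball_zero_iff.2 (hw.trans_lt hsR)) hwi,
    log_norm_canonicalFactor hi (mem_ball_zero_iff.2 (hz.trans_lt hsR)) hzi]
  linarith [log_norm_sq_sub_conj_mul_sub_le hi hsR hz hw]

lemma abs_log_norm_canonicalFactor_sub_le {i : ℂ} (hi : i ∈ ball (0 : ℂ) R) (hsR : s < R)
    (hz : ‖z‖ ≤ s) (hw : ‖w‖ ≤ s) (hzi : z ≠ i) (hwi : w ≠ i) (hα : 0 < α) (hα1 : α ≤ 1) :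
    |Real.log ‖Complex.canonicalFactor R i w‖ - Real.log ‖Complex.canonicalFactor R i z‖|
      ≤ ‖w - z‖ ^ α / α * (‖z - i‖ ^ (-α) + ‖w - i‖ ^ (-α)) + ‖w - z‖ / (R - s) := by
  have hzw := log_norm_canonicalFactor_sub_le hi hsR hz hw hzi hwi hα hα1
  have hwz := log_norm_canonicalFactor_sub_le hi hsR hw hz hwi hzi hα hα1
  rw [norm_sub_rev z w] at hwz
  have hznonneg : 0 ≤ ‖w - z‖ ^ α / α * ‖z - i‖ ^ (-α) := by positivity
  have hwnonneg : 0 ≤ ‖w - z‖ ^ α / α * ‖w - i‖ ^ (-α) := by positivity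
  rw [mul_add, abs_sub_le_iff]
  constructor <;> linarith

lemma divisor_apply_eq_zero_of_analyticAt_of_ne_zero {f : ℂ → ℂ} {U : Set ℂ}
    (hf : MeromorphicOn f U) (hfz : AnalyticAt ℂ f z) (hfz0 : f z ≠ 0) : divisor f U z = 0 := by
  by_cases hz : z ∈ U
  · rw [divisor_apply hf hz, hfz.meromorphicOrderAt_eq, hfz.analyticOrderAt_eq_zero.2 hfz0]
    rfl
  · exact Function.locallyFinsuppWithin.apply_eq_zero_of_notMem _ hz

lemma sum_mul_log_norm_canonicalFactor_sub_le {D : ℂ → ℤ} (F : Finset ℂ) (hsR : s < R)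
    (hz : ‖z‖ ≤ s) (hw : ‖w‖ ≤ s) (hα : 0 < α) (hα1 : α ≤ 1)
    (hD : ∀ i, D i ≠ 0 → i ∈ ball (0 : ℂ) R ∧ z ≠ i ∧ w ≠ i) :
    ∑ i ∈ F, (D i * Real.log ‖Complex.canonicalFactor R i z‖
        - D i * Real.log ‖Complex.canonicalFactor R i w‖)
      ≤ ∑ i ∈ F, |(D i : ℝ)| *
          (‖w - z‖ ^ α / α * (‖z - i‖ ^ (-α) + ‖w - i‖ ^ (-α)) + ‖w - z‖ / (R - s)) := by
  refine Finset.sum_le_sum fun i _ => ?_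
  by_cases hi : D i = 0
  · simp [hi]
  obtain ⟨hiR, hzi, hwi⟩ := hD i hi
  rw [← mul_sub]
  refine (le_abs_self _).trans ?_
  rw [abs_mul, abs_sub_comm]
  gcongr
  exact abs_log_norm_canonicalFactor_sub_le hiR hsR hz hw hzi hwi hα hα1

lemma log_norm_sub_le_circleAverage_add_sum {f : ℂ → ℂ} (hf : MeromorphicOn f (closedBall 0 R))
    (hord : ∀ z ∈ closedBall (0 : ℂ) R, meromorphicOrderAt f z ≠ ⊤) {F : Finset ℂ}
    (hF : (divisor f (ball 0 R)).support ⊆ F) (hsR : s < R) (hz : ‖z‖ ≤ s) (hw : ‖w‖ ≤ s)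
    (hfz : AnalyticAt ℂ f z ∧ f z ≠ 0) (hfw : AnalyticAt ℂ f w ∧ f w ≠ 0)
    (hα : 0 < α) (hα1 : α ≤ 1) :
    Real.log ‖f w‖ - Real.log ‖f z‖
      ≤ 2 * R * ‖w - z‖ / (R - s) ^ 2 * Real.circleAverage (fun ζ => |Real.log ‖f ζ‖|) 0 R
        + ∑ i ∈ F, |(divisor f (ball 0 R) i : ℝ)| *
          (‖w - z‖ ^ α / α * (‖z - i‖ ^ (-α) + ‖w - i‖ ^ (-α)) + ‖w - z‖ / (R - s)) := by
  have hR : 0 < R := ((norm_nonneg z).trans hz).trans_lt hsR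
  have hlog : CircleIntegrable (fun ζ => Real.log ‖f ζ‖) 0 R :=
    circleIntegrable_log_norm fun ζ hζ => hf ζ (by
      rw [abs_of_pos hR] at hζ
      exact sphere_subset_closedBall hζ)
  set D := divisor f (ball 0 R)
  have hfinsum : ∀ v : ℂ, ∑ᶠ i, D i * Real.log ‖Complex.canonicalFactor R i v‖
      = ∑ i ∈ F, D i * Real.log ‖Complex.canonicalFactor R i v‖ := fun v =>
    finsum_eq_sum_of_support_subset _ fun i hi => hF fun h => hi (by simp [h])
  have hne : ∀ {i v : ℂ}, D i ≠ 0 → AnalyticAt ℂ f v ∧ f v ≠ 0 → v ≠ i := fun hi hv h =>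
    hi (h ▸ divisor_apply_eq_zero_of_analyticAt_of_ne_zero
      (fun x hx => hf x (ball_subset_closedBall hx)) hv.1 hv.2)
  have hsum := sum_mul_log_norm_canonicalFactor_sub_le F hsR hz hw hα hα1 fun i hi =>
    ⟨D.supportWithinDomain hi, hne hi hfz, hne hi hfw⟩
  rw [log_norm_eq_circleAverage_sub_finsum_log_canonicalFactor hf hord
      (mem_ball_zero_iff.2 (hw.trans_lt hsR)) hfw.1 hfw.2,
    log_norm_eq_circleAverage_sub_finsum_log_canonicalFactor hf hord
      (mem_ball_zero_iff.2 (hz.trans_lt hsR)) hfz.1 hfz.2, hfinsum, hfinsum]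
  rw [Finset.sum_sub_distrib] at hsum
  linarith [circleAverage_re_herglotzRieszKernel_smul_sub_le hlog hsR hz hw]

end DifferenceEstimates

section CircleMeans

variable {α : ℝ}

lemma intervalIntegrable_abs_sin_rpow_neg (hα : 0 ≤ α) (hα1 : α < 1) (a b : ℝ) :
    IntervalIntegrable (fun θ => |Real.sin θ| ^ (-α)) volume a b := by
  have hperiodic : Function.Periodic (fun θ => |Real.sin θ| ^ (-α)) Real.pi := fun θ => by
    simp [Real.sin_add_pi]
  have hfirst : IntervalIntegrable (fun θ => |Real.sin θ| ^ (-α)) volume 0 (Real.pi / 2) := by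
    have hpow : IntervalIntegrable (fun θ : ℝ => (2 / Real.pi) ^ (-α) * θ ^ (-α)) volume
        0 (Real.pi / 2) :=
      (intervalIntegral.intervalIntegrable_rpow' (by linarith)).const_mul _
    refine hpow.mono_fun (by fun_prop : Measurable _).aestronglyMeasurable ?_
    rw [Set.uIoc_of_le (by positivity)]
    filter_upwards [ae_restrict_mem measurableSet_Ioc] with θ hθ
    have hjordan : 2 / Real.pi * θ ≤ Real.sin θ := Real.mul_le_sin hθ.1.le hθ.2
    have hpos : 0 < 2 / Real.pi * θ := mul_pos (by positivity) hθ.1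
    rw [← Real.mul_rpow (by positivity) hθ.1.le, Real.norm_of_nonneg (by positivity),
      Real.norm_of_nonneg (by positivity), abs_of_pos (hpos.trans_le hjordan)]
    exact Real.rpow_le_rpow_of_nonpos hpos hjordan (neg_nonpos.2 hα)
  have hsecond :
      IntervalIntegrable (fun θ => |Real.sin θ| ^ (-α)) volume (Real.pi / 2) Real.pi := by
    have hreflect := (hfirst.comp_sub_left Real.pi).symm
    simpa only [Real.sin_pi_sub, sub_zero, sub_half] using hreflect
  exact hperiodic.intervalIntegrable Real.pi_pos.ne' (t := 0)
    (by simpa using hfirst.trans hsecond) a b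

lemma ae_sin_sub_ne_zero (β : ℝ) : ∀ᵐ θ : ℝ, Real.sin (θ - β) ≠ 0 := by
  have hsub : {θ : ℝ | Real.sin (θ - β) = 0} ⊆ Set.range fun n : ℤ => n * Real.pi + β := by
    intro θ hθ
    obtain ⟨n, hn⟩ := Real.sin_eq_zero_iff.1 hθ
    exact ⟨n, by simp only [hn, sub_add_cancel]⟩
  simpa [ae_iff] using ((Set.countable_range _).mono hsub).measure_zero volume

lemma mul_abs_sin_sub_arg_le_norm_circleMap_sub (a : ℂ) {r : ℝ} (hr : 0 ≤ r) (θ : ℝ) :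
    r * |Real.sin (θ - a.arg)| ≤ ‖circleMap 0 r θ - a‖ := by
  have hrotate : circleMap 0 r θ - a
      = Complex.exp (a.arg * Complex.I) * (circleMap 0 r (θ - a.arg) - ‖a‖) := by
    have hexp : Complex.exp (θ * Complex.I) = Complex.exp (a.arg * Complex.I) *
        Complex.exp (((θ - a.arg : ℝ) : ℂ) * Complex.I) := by
      rw [← Complex.exp_add, Complex.ofReal_sub, ← add_mul, add_sub_cancel]
    conv_lhs => rw [← Complex.norm_mul_exp_arg_mul_I a]
    rw [circleMap_zero, circleMap_zero, hexp]
    ring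
  have him : (circleMap 0 r (θ - a.arg) - ‖a‖).im = r * Real.sin (θ - a.arg) := by
    rw [circleMap_zero, Complex.sub_im, Complex.ofReal_im, sub_zero, Complex.im_ofReal_mul,
      Complex.exp_ofReal_mul_I_im]
  calc r * |Real.sin (θ - a.arg)| = |(circleMap 0 r (θ - a.arg) - ‖a‖).im| := by
        rw [him, abs_mul, abs_of_nonneg hr]
    _ ≤ ‖circleMap 0 r (θ - a.arg) - ‖a‖‖ := Complex.abs_im_le_norm _
    _ = ‖circleMap 0 r θ - a‖ := by
        rw [hrotate, norm_mul, Complex.norm_exp_ofReal_mul_I, one_mul]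

lemma ae_norm_circleMap_sub_rpow_neg_le (hα : 0 ≤ α) (a : ℂ) {r : ℝ} (hr : 0 < r) :
    ∀ᵐ θ : ℝ, ‖circleMap 0 r θ - a‖ ^ (-α) ≤ r ^ (-α) * |Real.sin (θ - a.arg)| ^ (-α) := by
  filter_upwards [ae_sin_sub_ne_zero a.arg] with θ hθ
  have hpos : 0 < r * |Real.sin (θ - a.arg)| := mul_pos hr (abs_pos.2 hθ)
  rw [← Real.mul_rpow hr.le (abs_nonneg _)]
  exact Real.rpow_le_rpow_of_nonpos hpos (mul_abs_sin_sub_arg_le_norm_circleMap_sub a hr.le θ)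
    (neg_nonpos.2 hα)

/-- The mean of `|sin θ| ^ (-α)` over a period; finite for `α < 1`, while for `α ≥ 1` the integral
diverges and takes the junk value `0`. -/
noncomputable def sinRpowMean (α : ℝ) : ℝ :=
  (2 * Real.pi)⁻¹ * ∫ θ in 0..2 * Real.pi, |Real.sin θ| ^ (-α)

lemma sinRpowMean_nonneg (α : ℝ) : 0 ≤ sinRpowMean α :=
  mul_nonneg (by positivity)
    (intervalIntegral.integral_nonneg (by positivity) fun _ _ => by positivity)

lemma intervalIntegrable_rpow_neg_mul_abs_sin_sub_rpow_neg (hα : 0 ≤ α) (hα1 : α < 1) (r β : ℝ) :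
    IntervalIntegrable (fun θ => r ^ (-α) * |Real.sin (θ - β)| ^ (-α)) volume
      0 (2 * Real.pi) := by
  have hshift := (intervalIntegrable_abs_sin_rpow_neg hα hα1 (0 - β)
    (2 * Real.pi - β)).comp_sub_right β
  simp only [sub_add_cancel] at hshift
  exact hshift.const_mul _

lemma circleIntegrable_norm_sub_rpow_neg (hα : 0 ≤ α) (hα1 : α < 1) (a : ℂ) {r : ℝ} (hr : 0 < r) :
    CircleIntegrable (fun z => ‖z - a‖ ^ (-α)) 0 r := by
  have hmeas : Measurable fun θ => ‖circleMap 0 r θ - a‖ ^ (-α) := by fun_prop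
  refine (intervalIntegrable_rpow_neg_mul_abs_sin_sub_rpow_neg hα hα1 r a.arg).mono_fun
    hmeas.aestronglyMeasurable (ae_restrict_of_ae ?_)
  filter_upwards [ae_norm_circleMap_sub_rpow_neg_le hα a hr] with θ hθ
  rwa [Real.norm_of_nonneg (by positivity), Real.norm_of_nonneg (by positivity)]

lemma integral_abs_sin_sub_rpow_neg (α β : ℝ) :
    ∫ θ in 0..2 * Real.pi, |Real.sin (θ - β)| ^ (-α)
      = ∫ θ in 0..2 * Real.pi, |Real.sin θ| ^ (-α) := by
  have hperiodic : Function.Periodic (fun θ => |Real.sin θ| ^ (-α)) (2 * Real.pi) := fun θ => by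
    simp [Real.sin_add_two_pi]
  rw [intervalIntegral.integral_comp_sub_right fun θ => |Real.sin θ| ^ (-α)]
  simpa [sub_eq_neg_add] using hperiodic.intervalIntegral_add_eq (-β) 0

lemma circleAverage_norm_sub_rpow_neg_le (hα : 0 ≤ α) (hα1 : α < 1) (a : ℂ) {r : ℝ} (hr : 0 < r) :
    Real.circleAverage (fun z => ‖z - a‖ ^ (-α)) 0 r ≤ sinRpowMean α * r ^ (-α) := by
  calc Real.circleAverage (fun z => ‖z - a‖ ^ (-α)) 0 r
      ≤ (2 * Real.pi)⁻¹ * ∫ θ in 0..2 * Real.pi, r ^ (-α) * |Real.sin (θ - a.arg)| ^ (-α) := by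
        refine mul_le_mul_of_nonneg_left ?_ (by positivity)
        exact intervalIntegral.integral_mono_ae (by positivity)
          (circleIntegrable_norm_sub_rpow_neg hα hα1 a hr)
          (intervalIntegrable_rpow_neg_mul_abs_sin_sub_rpow_neg hα hα1 r a.arg)
          (ae_norm_circleMap_sub_rpow_neg_le hα a hr)
    _ = sinRpowMean α * r ^ (-α) := by
        rw [intervalIntegral.integral_const_mul, integral_abs_sin_sub_rpow_neg, sinRpowMean]
        ring

end CircleMeans

section NevanlinnaBounds

lemma circleAverage_abs_log_norm_eq_proximity_add_proximity {f : ℂ → ℂ} (hf : Meromorphic f)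
    (R : ℝ) :
    Real.circleAverage (fun z => |Real.log ‖f z‖|) 0 R
      = proximity f ⊤ R + proximity f⁻¹ ⊤ R := by
  simp only [proximity_top]
  rw [← Real.circleAverage_add hf.meromorphicOn.circleIntegrable_posLog_norm
    hf.inv.meromorphicOn.circleIntegrable_posLog_norm]
  congr 1
  ext z
  simp only [Pi.add_apply, Pi.inv_apply, norm_inv]
  rw [← Real.half_mul_log_add_log_abs, ← Real.half_mul_log_add_log_abs, Real.log_inv, abs_neg]
  ring

lemma sum_mul_log_div_le_logCounting {D : Function.locallyFinsupp ℂ ℤ} (hD : 0 ≤ D) {R R' : ℝ}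
    (hR : 1 ≤ R) (hRR' : R ≤ R') {F : Finset ℂ} (hF : ∀ i ∈ F, ‖i‖ ≤ R) :
    (∑ i ∈ F, (D i : ℝ)) * Real.log (R' / R)
      ≤ Function.locallyFinsuppWithin.logCounting D R' := by
  classical
  let S : Function.locallyFinsupp ℂ ℤ := ∑ i ∈ F, Function.locallyFinsuppWithin.single i (D i)
  have hS : S ≤ D := by
    rw [Function.locallyFinsuppWithin.le_def]
    intro x
    simp only [S, Function.locallyFinsuppWithin.coe_sum, Finset.sum_apply,
      Function.locallyFinsuppWithin.single_apply, Finset.sum_ite_eq]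
    split_ifs
    · exact le_rfl
    · exact hD x
  refine le_trans ?_ (Function.locallyFinsuppWithin.logCounting_le hS (hR.trans hRR'))
  simp only [S, map_sum, Finset.sum_apply, Finset.sum_mul]
  refine Finset.sum_le_sum fun i hi => ?_
  rw [Function.locallyFinsuppWithin.logCounting_single_eq_log_sub_const ((hF i hi).trans hRR'),
    Real.log_div (by linarith) (by linarith)]
  have hlog : Real.log ‖i‖ ≤ Real.log R := by
    rcases eq_or_ne i 0 with rfl | hi0
    · simpa using Real.log_nonneg hR
    · exact Real.log_le_log (norm_pos_iff.2 hi0) (hF i hi)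
  gcongr
  exact_mod_cast hD i

lemma sum_abs_divisor_ball_mul_log_div_le {f : ℂ → ℂ} (hf : Meromorphic f) {R R' : ℝ}
    (hR : 1 ≤ R) (hRR' : R ≤ R') {F : Finset ℂ} (hF : ∀ i ∈ F, i ∈ ball (0 : ℂ) R) :
    (∑ i ∈ F, |(divisor f (ball 0 R) i : ℝ)|) * Real.log (R' / R)
      ≤ logCounting f ⊤ R' + logCounting f 0 R' := by
  set D := divisor f Set.univ
  have habs : ∀ i ∈ F, |(divisor f (ball 0 R) i : ℝ)| = ((D⁻ + D⁺) i : ℤ) := by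
    intro i hi
    have hDi : divisor f (ball 0 R) i = D i := by
      rw [divisor_apply hf.meromorphicOn (hF i hi),
        divisor_apply hf.meromorphicOn (Set.mem_univ i)]
    rw [hDi, Function.locallyFinsuppWithin.coe_add, Pi.add_apply,
      Function.locallyFinsuppWithin.negPart_apply, Function.locallyFinsuppWithin.posPart_apply,
      add_comm, posPart_add_negPart, Int.cast_abs]
  have hbound := sum_mul_log_div_le_logCounting
    (add_nonneg (negPart_nonneg D) (posPart_nonneg D)) hR hRR'
    fun i hi => (mem_ball_zero_iff.1 (hF i hi)).le
  rwa [map_add, Pi.add_apply, ← Finset.sum_congr rfl habs, ← logCounting_top,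
    ← logCounting_zero] at hbound

lemma proximity_top_le_characteristic {f : ℂ → ℂ} {r : ℝ} (hr : 1 ≤ r) :
    proximity f ⊤ r ≤ characteristic f ⊤ r :=
  le_add_of_nonneg_right (logCounting_nonneg hr)

lemma logCounting_top_le_characteristic {f : ℂ → ℂ} (r : ℝ) :
    logCounting f ⊤ r ≤ characteristic f ⊤ r :=
  le_add_of_nonneg_left (proximity_nonneg r)

/-- The error term `|log |a||` in the first main theorem `T(r, 1/f) = T(r, f) - log |a|`, where `a`
is the leading Laurent coefficient of `f` at the origin. -/
noncomputable def firstMainConst (f : ℂ → ℂ) : ℝ := |Real.log ‖meromorphicTrailingCoeffAt f 0‖|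

lemma firstMainConst_nonneg (f : ℂ → ℂ) : 0 ≤ firstMainConst f := abs_nonneg _

lemma characteristic_inv_le_characteristic_add {f : ℂ → ℂ} (hf : Meromorphic f) {r : ℝ}
    (hr : r ≠ 0) : characteristic f⁻¹ ⊤ r ≤ characteristic f ⊤ r + firstMainConst f := by
  have hfirst := characteristic_sub_characteristic_inv_of_ne_zero hf hr
  have hlog : -firstMainConst f ≤ Real.log ‖meromorphicTrailingCoeffAt f 0‖ := neg_abs_le _
  linarith

lemma circleAverage_abs_log_norm_le {f : ℂ → ℂ} (hf : Meromorphic f) {R : ℝ} (hR : 1 ≤ R) :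
    Real.circleAverage (fun z => |Real.log ‖f z‖|) 0 R
      ≤ 2 * characteristic f ⊤ R + firstMainConst f := by
  rw [circleAverage_abs_log_norm_eq_proximity_add_proximity hf]
  linarith [proximity_top_le_characteristic (f := f) hR,
    proximity_top_le_characteristic (f := f⁻¹) hR,
    characteristic_inv_le_characteristic_add hf (r := R) (by positivity)]

lemma sum_abs_divisor_ball_le_div_log {f : ℂ → ℂ} (hf : Meromorphic f) {R R' : ℝ}
    (hR : 1 ≤ R) (hRR' : R < R') {F : Finset ℂ} (hF : ∀ i ∈ F, i ∈ ball (0 : ℂ) R) :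
    ∑ i ∈ F, |(divisor f (ball 0 R) i : ℝ)|
      ≤ (2 * characteristic f ⊤ R' + firstMainConst f) / Real.log (R' / R) := by
  have hR0 : 0 < R := zero_lt_one.trans_le hR
  have hR' : R' ≠ 0 := (hR0.trans hRR').ne'
  rw [le_div_iff₀ (Real.log_pos ((one_lt_div hR0).2 hRR'))]
  have hzero : logCounting f 0 R' ≤ characteristic f⁻¹ ⊤ R' :=
    logCounting_inv (f := f) ▸ logCounting_top_le_characteristic R'
  linarith [sum_abs_divisor_ball_mul_log_div_le hf hR hRR'.le hF,
    logCounting_top_le_characteristic (f := f) R',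
    characteristic_inv_le_characteristic_add hf hR']

end NevanlinnaBounds

section ShiftQuotient

variable {α : ℝ}

lemma circleIntegrable_const_mul_rpow_neg_add_rpow_neg_add_const (hα : 0 ≤ α) (hα1 : α < 1)
    (A B : ℝ) (a b : ℂ) {r : ℝ} (hr : 0 < r) :
    CircleIntegrable (fun z => A * (‖z - a‖ ^ (-α) + ‖z - b‖ ^ (-α)) + B) 0 r :=
  (((circleIntegrable_norm_sub_rpow_neg hα hα1 a hr).add
    (circleIntegrable_norm_sub_rpow_neg hα hα1 b hr)).const_mul A).add
      (circleIntegrable_const B 0 r)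

lemma circleAverage_const_mul_rpow_neg_add_rpow_neg_add_const_le (hα : 0 ≤ α) (hα1 : α < 1)
    {A : ℝ} (hA : 0 ≤ A) (B : ℝ) (a b : ℂ) {r : ℝ} (hr : 0 < r) :
    Real.circleAverage (fun z => A * (‖z - a‖ ^ (-α) + ‖z - b‖ ^ (-α)) + B) 0 r
      ≤ A * (2 * sinRpowMean α) * r ^ (-α) + B := by
  have ha := circleIntegrable_norm_sub_rpow_neg hα hα1 a hr
  have hb := circleIntegrable_norm_sub_rpow_neg hα hα1 b hr
  have hab : CircleIntegrable (fun z => A * (‖z - a‖ ^ (-α) + ‖z - b‖ ^ (-α))) 0 r :=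
    (ha.add hb).const_mul A
  have hsmul := Real.circleAverage_fun_smul (a := A) (c := 0) (R := r)
    (f := fun z : ℂ => ‖z - a‖ ^ (-α) + ‖z - b‖ ^ (-α))
  simp only [smul_eq_mul] at hsmul
  calc Real.circleAverage (fun z => A * (‖z - a‖ ^ (-α) + ‖z - b‖ ^ (-α)) + B) 0 r
      = A * (Real.circleAverage (fun z => ‖z - a‖ ^ (-α)) 0 r
          + Real.circleAverage (fun z => ‖z - b‖ ^ (-α)) 0 r) + B := by
        rw [Real.circleAverage_fun_add hab (circleIntegrable_const B 0 r), Real.circleAverage_const,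
          hsmul, Real.circleAverage_fun_add ha hb]
    _ ≤ A * (sinRpowMean α * r ^ (-α) + sinRpowMean α * r ^ (-α)) + B := by
        gcongr
        · exact circleAverage_norm_sub_rpow_neg_le hα hα1 a hr
        · exact circleAverage_norm_sub_rpow_neg_le hα hα1 b hr
    _ = A * (2 * sinRpowMean α) * r ^ (-α) + B := by ring

/-- The constant with which the poles and zeros of `f` contribute to the bound on
`m(r, f(z + c) / f(z))`: each of them adds at most `shiftConst α c * r ^ (-α)`, up to a term
independent of its position. -/
noncomputable def shiftConst (α : ℝ) (c : ℂ) : ℝ := ‖c‖ ^ α / α * (2 * sinRpowMean α)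

lemma shiftConst_nonneg (hα : 0 ≤ α) (c : ℂ) : 0 ≤ shiftConst α c :=
  mul_nonneg (by positivity) (mul_nonneg zero_le_two (sinRpowMean_nonneg α))

lemma circleAverage_const_add_sum_mul_le (hα : 0 ≤ α) (hα1 : α < 1) (c : ℂ) (F : Finset ℂ)
    {m : ℂ → ℝ} (hm : ∀ i, 0 ≤ m i) (A B : ℝ) {r : ℝ} (hr : 0 < r) :
    CircleIntegrable (fun z => A + ∑ i ∈ F,
        m i * (‖c‖ ^ α / α * (‖z - i‖ ^ (-α) + ‖z - (i - c)‖ ^ (-α)) + B)) 0 r ∧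
      Real.circleAverage (fun z => A + ∑ i ∈ F,
        m i * (‖c‖ ^ α / α * (‖z - i‖ ^ (-α) + ‖z - (i - c)‖ ^ (-α)) + B)) 0 r
      ≤ A + (∑ i ∈ F, m i) * (shiftConst α c * r ^ (-α) + B) := by
  have hterm : ∀ i ∈ F, CircleIntegrable (fun z =>
      m i * (‖c‖ ^ α / α * (‖z - i‖ ^ (-α) + ‖z - (i - c)‖ ^ (-α)) + B)) 0 r := fun i _ =>
    (circleIntegrable_const_mul_rpow_neg_add_rpow_neg_add_const hα hα1 _ B i _ hr).const_mul _
  have hsum := CircleIntegrable.fun_sum F hterm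
  refine ⟨(circleIntegrable_const A 0 r).add hsum, ?_⟩
  rw [Real.circleAverage_fun_add (circleIntegrable_const A 0 r) hsum, Real.circleAverage_const,
    Real.circleAverage_fun_sum hterm, Finset.sum_mul]
  gcongr with i
  simp_rw [← smul_eq_mul (m i)]
  rw [Real.circleAverage_fun_smul]
  exact mul_le_mul_of_nonneg_left (circleAverage_const_mul_rpow_neg_add_rpow_neg_add_const_le
    hα hα1 (by positivity) B i _ hr) (hm i)

variable {f : ℂ → ℂ}

lemma posLog_norm_shift_div_le (hf : Meromorphic f) (hord : ∀ z, meromorphicOrderAt f z ≠ ⊤)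
    {c z : ℂ} (hα : 0 < α) (hα1 : α ≤ 1) {R : ℝ} (hR : ‖z‖ + ‖c‖ < R) {F : Finset ℂ}
    (hF : (divisor f (ball 0 R)).support ⊆ F) (hfz : AnalyticAt ℂ f z ∧ f z ≠ 0)
    (hfzc : AnalyticAt ℂ f (z + c) ∧ f (z + c) ≠ 0) :
    Real.posLog ‖f (z + c) / f z‖
      ≤ 2 * R * ‖c‖ / (R - (‖z‖ + ‖c‖)) ^ 2 * Real.circleAverage (fun ζ => |Real.log ‖f ζ‖|) 0 R
        + ∑ i ∈ F, |(divisor f (ball 0 R) i : ℝ)| *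
          (‖c‖ ^ α / α * (‖z - i‖ ^ (-α) + ‖z - (i - c)‖ ^ (-α)) + ‖c‖ / (R - (‖z‖ + ‖c‖))) := by
  have hlog := log_norm_sub_le_circleAverage_add_sum hf.meromorphicOn (fun z _ => hord z) hF hR
    (le_add_of_nonneg_right (norm_nonneg c)) (norm_add_le z c) hfz hfzc hα hα1
  simp only [add_sub_cancel_left] at hlog
  simp only [sub_sub_eq_add_sub]
  rw [Real.posLog_apply, norm_div,
    Real.log_div (norm_ne_zero_iff.2 hfzc.2) (norm_ne_zero_iff.2 hfz.2)]
  have hR0 : 0 < R := (by positivity : 0 ≤ ‖z‖ + ‖c‖).trans_lt hR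
  have hmean : 0 ≤ Real.circleAverage (fun ζ => |Real.log ‖f ζ‖|) 0 R :=
    Real.circleAverage_nonneg_of_nonneg fun _ _ => abs_nonneg _
  exact max_le (by positivity) hlog

lemma meromorphic_shift_div (hf : Meromorphic f) (c : ℂ) :
    Meromorphic fun z => f (z + c) / f z :=
  Meromorphic.div (fun z => (hf (z + c)).comp_analyticAt (g := fun z => z + c) (by fun_prop)) hf

theorem proximity_shift_div_le_circleAverage_add_sum (hf : Meromorphic f)
    (hord : ∀ z, meromorphicOrderAt f z ≠ ⊤) (c : ℂ) (hα : 0 < α) (hα1 : α < 1) {r R : ℝ}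
    (hr : 0 < r) (hR : r + ‖c‖ < R) {F : Finset ℂ} (hF : (divisor f (ball 0 R)).support ⊆ F) :
    proximity (fun z => f (z + c) / f z) ⊤ r
      ≤ 2 * R * ‖c‖ / (R - (r + ‖c‖)) ^ 2 * Real.circleAverage (fun ζ => |Real.log ‖f ζ‖|) 0 R
        + (∑ i ∈ F, |(divisor f (ball 0 R) i : ℝ)|) *
          (shiftConst α c * r ^ (-α) + ‖c‖ / (R - (r + ‖c‖))) := by
  obtain ⟨hint, hmean⟩ := circleAverage_const_add_sum_mul_le hα.le hα1 c F
    (m := fun i => |(divisor f (ball 0 R) i : ℝ)|) (fun _ => abs_nonneg _)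
    (2 * R * ‖c‖ / (R - (r + ‖c‖)) ^ 2 * Real.circleAverage (fun ζ => |Real.log ‖f ζ‖|) 0 R)
    (‖c‖ / (R - (r + ‖c‖))) hr
  refine le_trans ?_ hmean
  rw [proximity_top]
  refine circleAverage_mono_of_codiscreteWithin hr.ne'
    (meromorphic_shift_div hf c).meromorphicOn.circleIntegrable_posLog_norm hint ?_
  have hregular := eventually_codiscreteWithin_analyticAt_and_ne_zero
    (U := Set.univ) hf.meromorphicOn fun z _ => hord z
  filter_upwards [codiscreteWithin_mono (Set.subset_univ _)
      (hregular.and (eventually_codiscrete_add_const hregular c)),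
    self_mem_codiscreteWithin (sphere (0 : ℂ) |r|)] with z hz hzr
  rw [abs_of_pos hr, mem_sphere_zero_iff_norm] at hzr
  subst hzr
  exact posLog_norm_shift_div_le hf hord hα hα1.le hR hF hz.1 hz.2

lemma proximity_shift_div_le_characteristic_mul (hf : Meromorphic f)
    (hord : ∀ z, meromorphicOrderAt f z ≠ ⊤) (c : ℂ) (hα : 0 < α) (hα1 : α < 1) {r R R' : ℝ}
    (hr : 1 ≤ r) (hR : r + ‖c‖ < R) (hRR' : R < R') :
    proximity (fun z => f (z + c) / f z) ⊤ r
      ≤ (2 * characteristic f ⊤ R' + firstMainConst f) *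
        (2 * R * ‖c‖ / (R - (r + ‖c‖)) ^ 2
          + (shiftConst α c * r ^ (-α) + ‖c‖ / (R - (r + ‖c‖))) / Real.log (R' / R)) := by
  have hr0 : 0 < r := zero_lt_one.trans_le hr
  have hR1 : 1 ≤ R := by linarith [norm_nonneg c]
  have hK := shiftConst_nonneg hα.le c
  have hfin : (divisor f (ball 0 R)).support.Finite :=
    (hf.meromorphicOn (s := closedBall 0 R)).divisor_ball_support_finite
  have hmono : characteristic f ⊤ R ≤ characteristic f ⊤ R' :=
    characteristic_monotoneOn hf (Set.mem_Ioi.2 (by linarith)) (Set.mem_Ioi.2 (by linarith)) hRR'.le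
  set X := 2 * characteristic f ⊤ R' + firstMainConst f
  have hmean : Real.circleAverage (fun ζ => |Real.log ‖f ζ‖|) 0 R ≤ X :=
    (circleAverage_abs_log_norm_le hf hR1).trans (by dsimp only [X]; gcongr)
  have hcount : ∑ i ∈ hfin.toFinset, |(divisor f (ball 0 R) i : ℝ)| ≤ X / Real.log (R' / R) :=
    sum_abs_divisor_ball_le_div_log hf hR1 hRR' fun i hi =>
      (divisor f (ball 0 R)).supportWithinDomain (hfin.mem_toFinset.1 hi)
  calc proximity (fun z => f (z + c) / f z) ⊤ r
      ≤ 2 * R * ‖c‖ / (R - (r + ‖c‖)) ^ 2 * X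
        + X / Real.log (R' / R) * (shiftConst α c * r ^ (-α) + ‖c‖ / (R - (r + ‖c‖))) := by
        refine (proximity_shift_div_le_circleAverage_add_sum hf hord c hα hα1 hr0 hR
          (hfin.coe_toFinset.ge)).trans ?_
        gcongr
    _ = X * (2 * R * ‖c‖ / (R - (r + ‖c‖)) ^ 2
          + (shiftConst α c * r ^ (-α) + ‖c‖ / (R - (r + ‖c‖))) / Real.log (R' / R)) := by ring

lemma proximity_shift_div_le_characteristic_add (hf : Meromorphic f)
    (hord : ∀ z, meromorphicOrderAt f z ≠ ⊤) (c : ℂ) (hα : 0 < α) (hα1 : α < 1) {r h : ℝ}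
    (hr : 1 ≤ r) (hh : 0 < h) :
    proximity (fun z => f (z + c) / f z) ⊤ r
      ≤ (2 * characteristic f ⊤ (r + h + ‖c‖) + firstMainConst f) *
        ((r + h + ‖c‖) / h * (2 * shiftConst α c * r ^ (-α) + 12 * ‖c‖ / h)) := by
  have hc := norm_nonneg c
  have hK := shiftConst_nonneg hα.le c
  set R := r + ‖c‖ + h / 2 with hR
  set R' := r + h + ‖c‖ with hR'
  have hR'0 : 0 < R' := by linarith
  have hgap : R - (r + ‖c‖) = h / 2 := by rw [hR]; ring
  have hlog : h / 2 / R' ≤ Real.log (R' / R) :=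
    calc h / 2 / R' = 1 - (R' / R)⁻¹ := by
          rw [inv_div, one_sub_div hR'0.ne', hR, hR']
          ring
      _ ≤ Real.log (R' / R) := Real.one_sub_inv_le_log_of_pos (div_pos hR'0 (by linarith))
  have hX : 0 ≤ 2 * characteristic f ⊤ R' + firstMainConst f :=
    add_nonneg (mul_nonneg zero_le_two (characteristic_nonneg (by linarith)))
      (firstMainConst_nonneg f)
  refine (proximity_shift_div_le_characteristic_mul hf hord c hα hα1 (R := R) (R' := R') hr
    (by linarith) (by linarith)).trans (mul_le_mul_of_nonneg_left ?_ hX)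
  rw [hgap]
  calc 2 * R * ‖c‖ / (h / 2) ^ 2
        + (shiftConst α c * r ^ (-α) + ‖c‖ / (h / 2)) / Real.log (R' / R)
      ≤ 2 * R' * ‖c‖ / (h / 2) ^ 2
        + (shiftConst α c * r ^ (-α) + ‖c‖ / (h / 2)) / (h / 2 / R') := by
        gcongr
        linarith
    _ = R' / h * (2 * shiftConst α c * r ^ (-α) + 12 * ‖c‖ / h) := by
        field_simp
        ring

/- With `h = r / p` the loss is only the factor `p ^ 2`; Borel's lemma later allows `p` to be a
small power of the characteristic. -/
theorem proximity_shift_div_le_characteristic_mul_rpow_neg (hf : Meromorphic f)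
    (hord : ∀ z, meromorphicOrderAt f z ≠ ⊤) (c : ℂ) (hα : 0 < α) (hα1 : α < 1) {r p : ℝ}
    (hr : 1 ≤ r) (hp : 1 ≤ p) :
    proximity (fun z => f (z + c) / f z) ⊤ r
      ≤ (2 * characteristic f ⊤ (r + r / p + ‖c‖) + firstMainConst f) *
        ((2 + ‖c‖) * (2 * shiftConst α c + 12 * ‖c‖) * p ^ 2 * r ^ (-α)) := by
  have hr0 : 0 < r := zero_lt_one.trans_le hr
  have hp0 : 0 < p := zero_lt_one.trans_le hp
  have hK := shiftConst_nonneg hα.le c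
  have hrp : 0 < r / p := div_pos hr0 hp0
  have hX : 0 ≤ 2 * characteristic f ⊤ (r + r / p + ‖c‖) + firstMainConst f :=
    add_nonneg (mul_nonneg zero_le_two
      (characteristic_nonneg (by linarith [norm_nonneg c]))) (firstMainConst_nonneg f)
  refine (proximity_shift_div_le_characteristic_add hf hord c hα hα1 hr hrp).trans
    (mul_le_mul_of_nonneg_left ?_ hX)
  have hratio : (r + r / p + ‖c‖) / (r / p) ≤ (2 + ‖c‖) * p := by
    rw [div_le_iff₀ hrp, mul_assoc, mul_div_cancel₀ r hp0.ne']
    nlinarith [div_le_self hr0.le hp, norm_nonneg c]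
  have hinv : r⁻¹ ≤ r ^ (-α) := by
    rw [← Real.rpow_neg_one]
    exact Real.rpow_le_rpow_of_exponent_le hr (neg_le_neg hα1.le)
  calc (r + r / p + ‖c‖) / (r / p) * (2 * shiftConst α c * r ^ (-α) + 12 * ‖c‖ / (r / p))
      = (r + r / p + ‖c‖) / (r / p) *
          (2 * shiftConst α c * 1 * r ^ (-α) + 12 * ‖c‖ * p * r⁻¹) := by
        rw [mul_one, div_div_eq_mul_div (12 * ‖c‖) r p, div_eq_mul_inv _ r]
    _ ≤ (2 + ‖c‖) * p * (2 * shiftConst α c * p * r ^ (-α) + 12 * ‖c‖ * p * r ^ (-α)) := by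
        gcongr
    _ = (2 + ‖c‖) * (2 * shiftConst α c + 12 * ‖c‖) * p ^ 2 * r ^ (-α) := by ring

end ShiftQuotient

section BorelGrowth

lemma setLIntegral_ofReal_inv_le_of_forall_le_mul {G : Set ℝ} {r0 η : ℝ} (hr0 : 0 < r0)
    (hη : 0 ≤ η) (hlow : ∀ x ∈ G, r0 ≤ x) (hG : ∀ x ∈ G, ∀ y ∈ G, y ≤ x * (1 + η)) :
    ∫⁻ r in G, ENNReal.ofReal r⁻¹ ≤ ENNReal.ofReal η := by
  rcases G.eq_empty_or_nonempty with rfl | hne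
  · simp
  set a := sInf G
  have ha : 0 < a := hr0.trans_le (le_csInf hne hlow)
  have hη' : 0 < 1 + η := by positivity
  have hsub : G ⊆ Set.Icc a (a * (1 + η)) := fun y hy =>
    ⟨csInf_le ⟨r0, hlow⟩ hy, (div_le_iff₀ hη').1
      (le_csInf hne fun x hx => (div_le_iff₀ hη').2 (hG x hx y hy))⟩
  calc ∫⁻ r in G, ENNReal.ofReal r⁻¹
      ≤ ∫⁻ r in Set.Icc a (a * (1 + η)), ENNReal.ofReal r⁻¹ := lintegral_mono_set hsub
    _ ≤ ∫⁻ _ in Set.Icc a (a * (1 + η)), ENNReal.ofReal a⁻¹ :=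
        setLIntegral_mono' measurableSet_Icc fun x hx =>
          ENNReal.ofReal_le_ofReal (inv_anti₀ ha hx.1)
    _ = ENNReal.ofReal η := by
        rw [setLIntegral_const, Real.volume_Icc, ← ENNReal.ofReal_mul (by positivity)]
        congr 1
        field_simp
        ring

variable {S : ℝ → ℝ} {r0 κ : ℝ}

/-- The radii `r ≥ r0` at which the growth estimate `S (r + r / S r ^ κ) ≤ 2 * S r` of Borel's lemma
fails. -/
def borelExceptionalSet (S : ℝ → ℝ) (r0 κ : ℝ) : Set ℝ :=
  {r | r0 ≤ r ∧ 2 * S r < S (r + r / S r ^ κ)}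

lemma le_add_div_rpow_of_lt_two_mul {x y b : ℝ} (hr0 : 0 < r0) (hS : MonotoneOn S (Set.Ici r0))
    (hx : x ∈ borelExceptionalSet S r0 κ) (hy : r0 ≤ y) (hb : 0 < b) (hbx : b ≤ S x)
    (hyb : S y < 2 * b) : y ≤ x + x / S x ^ κ := by
  by_contra! hlt
  have hstep : 0 ≤ x / S x ^ κ :=
    div_nonneg (hr0.trans_le hx.1).le (Real.rpow_nonneg (hb.trans_le hbx).le κ)
  have hmono : S (x + x / S x ^ κ) ≤ S y :=
    hS (Set.mem_Ici.2 (by linarith [hx.1])) (Set.mem_Ici.2 hy) hlt.le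
  linarith [hx.2]

lemma setLIntegral_borelExceptionalSet_level_le (hr0 : 0 < r0) (hκ : 0 ≤ κ)
    (hS : MonotoneOn S (Set.Ici r0)) (n : ℕ) :
    ∫⁻ r in {r ∈ borelExceptionalSet S r0 κ | 2 ^ n ≤ S r ∧ S r < 2 ^ (n + 1)},
      ENNReal.ofReal r⁻¹ ≤ ENNReal.ofReal (((2 : ℝ) ^ κ)⁻¹ ^ n) := by
  refine setLIntegral_ofReal_inv_le_of_forall_le_mul hr0 (by positivity) (fun x hx => hx.1.1) ?_
  rintro x ⟨hx, hxn, -⟩ y ⟨hy, -, hyn⟩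
  have hpow : ((2 : ℝ) ^ κ) ^ n ≤ S x ^ κ :=
    calc ((2 : ℝ) ^ κ) ^ n = ((2 : ℝ) ^ n) ^ κ := by
          rw [← Real.rpow_mul_natCast zero_le_two, ← Real.rpow_natCast_mul zero_le_two, mul_comm]
      _ ≤ S x ^ κ := by gcongr
  calc y ≤ x + x / S x ^ κ := le_add_div_rpow_of_lt_two_mul hr0 hS hx hy.1
        (by positivity) hxn (by rwa [← pow_succ'])
    _ ≤ x + x / ((2 : ℝ) ^ κ) ^ n := by
        gcongr
        exact (hr0.trans_le hx.1).le
    _ = x * (1 + ((2 : ℝ) ^ κ)⁻¹ ^ n) := by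
        rw [inv_pow]
        ring

theorem finLogMeasure_borelExceptionalSet (hr0 : 0 < r0) (hκ : 0 < κ)
    (hS : MonotoneOn S (Set.Ici r0)) (hS1 : ∀ r, r0 ≤ r → 1 ≤ S r) :
    FinLogMeasure (borelExceptionalSet S r0 κ) := by
  refine ⟨fun r hr => hr0.trans_le hr.1, ?_⟩
  have hq : ((2 : ℝ) ^ κ)⁻¹ < 1 := inv_lt_one_of_one_lt₀ (Real.one_lt_rpow one_lt_two hκ)
  have hcover : borelExceptionalSet S r0 κ
      ⊆ ⋃ n : ℕ, {r ∈ borelExceptionalSet S r0 κ | 2 ^ n ≤ S r ∧ S r < 2 ^ (n + 1)} := by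
    intro r hr
    obtain ⟨n, hn⟩ := exists_nat_pow_near (hS1 r hr.1) one_lt_two
    exact Set.mem_iUnion.2 ⟨n, hr, hn⟩
  calc ∫⁻ r in borelExceptionalSet S r0 κ, ENNReal.ofReal r⁻¹
      ≤ ∑' n : ℕ, ∫⁻ r in {r ∈ borelExceptionalSet S r0 κ | 2 ^ n ≤ S r ∧ S r < 2 ^ (n + 1)},
          ENNReal.ofReal r⁻¹ := (lintegral_mono_set hcover).trans (lintegral_iUnion_le _ _)
    _ ≤ ∑' n : ℕ, ENNReal.ofReal (((2 : ℝ) ^ κ)⁻¹ ^ n) :=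
        ENNReal.tsum_le_tsum (setLIntegral_borelExceptionalSet_level_le hr0 hκ.le hS)
    _ < ⊤ := (summable_geometric_of_lt_one (by positivity) hq).tsum_ofReal_lt_top

end BorelGrowth

section Conclusion

variable {f : ℂ → ℂ}

lemma meromorphicOrderAt_ne_top_of_characteristic_pos (hf : Meromorphic f) {r : ℝ} (hr : r ≠ 0)
    (hT : 0 < characteristic f ⊤ r) (z : ℂ) : meromorphicOrderAt f z ≠ ⊤ := by
  refine hf.exists_meromorphicOrderAt_ne_top_iff_forall.1 ?_ z
  by_contra! htop
  have hzero : f =ᶠ[codiscrete ℂ] fun _ => 0 := by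
    simp only [Filter.EventuallyEq, Filter.Eventually, codiscrete,
      mem_codiscreteWithin_iff_forall_mem_nhdsNE, Set.compl_univ, Set.union_empty]
    exact fun x _ => meromorphicOrderAt_eq_top_iff.1 (htop x)
  rw [characteristic_congr_codiscrete hzero hr] at hT
  simp [characteristic] at hT

lemma proximity_shift_div_le_of_characteristic_le_two_mul (hf : Meromorphic f)
    (hord : ∀ z, meromorphicOrderAt f z ≠ ⊤) (c : ℂ) {α ε r t : ℝ} (hα : 0 < α) (hα1 : α < 1)
    (hε : 0 < ε) (hr : 1 ≤ r) (ht : 0 < t) (htT : t ≤ characteristic f ⊤ (r + ‖c‖))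
    (hgrowth : characteristic f ⊤ (r + r / (characteristic f ⊤ (r + ‖c‖) / t) ^ (ε / 2) + ‖c‖)
      ≤ 2 * characteristic f ⊤ (r + ‖c‖)) :
    proximity (fun z => f (z + c) / f z) ⊤ r
      ≤ (4 * t + firstMainConst f) * ((2 + ‖c‖) * (2 * shiftConst α c + 12 * ‖c‖)) / t ^ (1 + ε)
        * characteristic f ⊤ (r + ‖c‖) ^ (1 + ε) * r ^ (-α) := by
  have hK := shiftConst_nonneg hα.le c
  have hA := firstMainConst_nonneg f
  set T := characteristic f ⊤ (r + ‖c‖)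
  set S := T / t with hS
  set B := (2 + ‖c‖) * (2 * shiftConst α c + 12 * ‖c‖)
  have hTS : T = t * S := (mul_div_cancel₀ T ht.ne').symm
  have hS1 : 1 ≤ S := (one_le_div ht).2 htT
  have hS0 : 0 < S := zero_lt_one.trans_le hS1
  have hpow : S * (S ^ (ε / 2)) ^ 2 = S ^ (1 + ε) := by
    rw [← Real.rpow_mul_natCast hS0.le, Nat.cast_ofNat, div_mul_cancel₀ ε two_ne_zero,
      Real.rpow_one_add' hS0.le (by positivity)]
  calc proximity (fun z => f (z + c) / f z) ⊤ r
      ≤ (2 * characteristic f ⊤ (r + r / S ^ (ε / 2) + ‖c‖) + firstMainConst f)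
          * (B * (S ^ (ε / 2)) ^ 2 * r ^ (-α)) :=
        proximity_shift_div_le_characteristic_mul_rpow_neg hf hord c hα hα1 hr
          (Real.one_le_rpow hS1 (half_pos hε).le)
    _ ≤ (2 * (2 * T) + firstMainConst f * S) * (B * (S ^ (ε / 2)) ^ 2 * r ^ (-α)) := by
        gcongr
        exact le_mul_of_one_le_right hA hS1
    _ = (4 * t + firstMainConst f) * B * S ^ (1 + ε) * r ^ (-α) := by
        rw [hTS, ← hpow]
        ring
    _ = (4 * t + firstMainConst f) * B / t ^ (1 + ε) * T ^ (1 + ε) * r ^ (-α) := by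
        rw [hS, Real.div_rpow (ht.le.trans htT) ht.le]
        ring

theorem exists_finLogMeasure_proximity_shift_div_le (hf : Meromorphic f) (c : ℂ) {α ε r0 : ℝ}
    (hα : 0 < α) (hα1 : α < 1) (hε : 0 < ε) (hr0 : 1 ≤ r0) (hT : 0 < characteristic f ⊤ r0) :
    ∃ C ≥ 0, ∃ E : Set ℝ, FinLogMeasure E ∧ ∀ r ≥ r0, r ∉ E →
      proximity (fun z => f (z + c) / f z) ⊤ r
        ≤ C * characteristic f ⊤ (r + ‖c‖) ^ (1 + ε) * r ^ (-α) := by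
  have hr0' : 0 < r0 := zero_lt_one.trans_le hr0
  have hK := shiftConst_nonneg hα.le c
  have hA := firstMainConst_nonneg f
  have hmono : MonotoneOn (characteristic f ⊤) (Set.Ioi 0) := characteristic_monotoneOn hf
  have hshift : ∀ {x : ℝ}, r0 ≤ x → x + ‖c‖ ∈ Set.Ioi 0 := fun hx =>
    Set.mem_Ioi.2 (by linarith [norm_nonneg c])
  set t := characteristic f ⊤ r0
  have ht : ∀ {r : ℝ}, r0 ≤ r → t ≤ characteristic f ⊤ (r + ‖c‖) := fun hr =>
    hmono hr0' (hshift hr) (by linarith [norm_nonneg c])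
  let S : ℝ → ℝ := fun r => characteristic f ⊤ (r + ‖c‖) / t
  have hS : MonotoneOn S (Set.Ici r0) := fun x hx y hy hxy =>
    div_le_div_of_nonneg_right (hmono (hshift hx) (hshift hy) (by gcongr)) hT.le
  refine ⟨(4 * t + firstMainConst f) * ((2 + ‖c‖) * (2 * shiftConst α c + 12 * ‖c‖)) / t ^ (1 + ε),
    by positivity, borelExceptionalSet S r0 (ε / 2),
    finLogMeasure_borelExceptionalSet hr0' (half_pos hε) hS fun r hr => (one_le_div hT).2 (ht hr),
    fun r hr hrE => ?_⟩
  have hgrowth : S (r + r / S r ^ (ε / 2)) ≤ 2 * S r := not_lt.1 fun h => hrE ⟨hr, h⟩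
  rw [← mul_div_assoc, div_le_div_iff_of_pos_right hT] at hgrowth
  exact proximity_shift_div_le_of_characteristic_le_two_mul hf
    (meromorphicOrderAt_ne_top_of_characteristic_pos hf hr0'.ne' hT) c hα hα1 hε (hr0.trans hr) hT
    (ht hr) hgrowth

lemma tendsto_div_div_rpow_of_le_mul_rpow_neg {l : Filter ℝ} (hl : l ≤ atTop) {m P : ℝ → ℝ}
    {C α δ : ℝ} (hδ : δ < α) (hC : 0 ≤ C) (hm : ∀ᶠ r in l, 0 ≤ m r) (hP : ∀ᶠ r in l, 0 ≤ P r)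
    (hle : ∀ᶠ r in l, m r ≤ C * P r * r ^ (-α)) :
    Tendsto (fun r => m r / (P r / r ^ δ)) l (𝓝 0) := by
  have hlim : Tendsto (fun r : ℝ => C * r ^ (-(α - δ))) l (𝓝 0) := by
    simpa using ((tendsto_rpow_neg_atTop (sub_pos.2 hδ)).const_mul C).mono_left hl
  have hpos : ∀ᶠ r in l, 0 < r := hl (eventually_gt_atTop 0)
  refine squeeze_zero' ?_ ?_ hlim
  · filter_upwards [hm, hP, hpos] with r hmr hPr hr
    positivity
  · filter_upwards [hP, hle, hpos] with r hPr hler hr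
    refine div_le_of_le_mul₀ (by positivity) (by positivity) (hler.trans_eq ?_)
    have hsplit : r ^ (-α) = r ^ (-(α - δ)) / r ^ δ := by
      rw [← Real.rpow_sub hr]
      ring_nf
    rw [hsplit]
    ring

theorem exists_tendsto_nevm_shift_div_of_characteristic_pos (hf : Meromorphic f) (c : ℂ)
    {δ ε r0 : ℝ} (hδ : δ < 1) (hε : 0 < ε) (hr0 : 1 ≤ r0) (hT : 0 < characteristic f ⊤ r0) :
    ∃ E : Set ℝ, FinLogMeasure E ∧
      Tendsto (fun r : ℝ => nevm (fun z => f (z + c) / f z) r /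
          (nevT f (r + ‖c‖) ^ (1 + ε) / r ^ δ))
        (atTop ⊓ 𝓟 Eᶜ) (𝓝 0) := by
  obtain ⟨α, hα, hα1⟩ := exists_between (max_lt hδ one_pos)
  rw [max_lt_iff] at hα
  obtain ⟨C, hC, E, hE, hbound⟩ :=
    exists_finLogMeasure_proximity_shift_div_le hf c hα.2 hα1 hε hr0 hT
  have hlarge : ∀ᶠ r in atTop ⊓ 𝓟 Eᶜ, r0 ≤ r :=
    (eventually_ge_atTop r0).filter_mono inf_le_left
  have hnotMem : ∀ᶠ r in atTop ⊓ 𝓟 Eᶜ, r ∉ E := mem_inf_of_right (mem_principal_self Eᶜ)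
  have hnevT : ∀ᶠ r in atTop ⊓ 𝓟 Eᶜ, nevT f (r + ‖c‖) = characteristic f ⊤ (r + ‖c‖) :=
    hlarge.mono fun r hr => nevT_eq_characteristic hf (by linarith [norm_nonneg c])
  refine ⟨E, hE, tendsto_div_div_rpow_of_le_mul_rpow_neg inf_le_left hα.1 hC ?_ ?_ ?_⟩
  · exact .of_forall fun r => nevm_eq_proximity (fun z => f (z + c) / f z) r ▸ proximity_nonneg r
  · filter_upwards [hlarge, hnevT] with r hr hTr
    rw [hTr]
    exact Real.rpow_nonneg (characteristic_nonneg (by linarith [norm_nonneg c])) _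
  · filter_upwards [hlarge, hnotMem, hnevT] with r hr hrE hTr
    rw [nevm_eq_proximity, hTr]
    exact hbound r hr hrE

lemma tendsto_div_rpow_div_of_eventually_eq_zero {l : Filter ℝ} {m T : ℝ → ℝ} {β δ : ℝ}
    (hβ : β ≠ 0) (hT : ∀ᶠ r in l, T r = 0) :
    Tendsto (fun r => m r / (T r ^ β / r ^ δ)) l (𝓝 0) := by
  refine tendsto_const_nhds.congr' (hT.mono fun r hr => ?_)
  simp only [hr, Real.zero_rpow hβ, zero_div, div_zero]

end Conclusion

/-- **Difference analogue of the Lemma on the Logarithmic Derivative.**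
Let `f` be a non-constant meromorphic function on ℂ, `c ∈ ℂ`, `δ < 1` and `ε > 0`. Then
`m(r, f(z+c)/f(z)) = o(T(r+|c|, f)^{1+ε} / r^δ)` as `r → ∞` outside a possible
exceptional set `E` of finite logarithmic measure. -/
theorem log_difference_lemma (f : ℂ → ℂ) (hf : MeromorphicOn f Set.univ)
    (hnc : Nonconstant f) (c : ℂ) (δ ε : ℝ) (hδ : δ < 1) (hε : 0 < ε) :
    ∃ E : Set ℝ, FinLogMeasure E ∧
      Tendsto (fun r : ℝ => nevm (fun z => f (z + c) / f z) r /
          (nevT f (r + ‖c‖) ^ (1 + ε) / r ^ δ))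
        (atTop ⊓ 𝓟 Eᶜ) (𝓝 0) := by
  have hf' : Meromorphic f := fun z => hf z trivial
  by_cases hpos : ∃ r0, 1 ≤ r0 ∧ 0 < characteristic f ⊤ r0
  · obtain ⟨r0, hr0, hT⟩ := hpos
    exact exists_tendsto_nevm_shift_div_of_characteristic_pos hf' c hδ hε hr0 hT
  /- `T(r, f)` vanishes for all `r ≥ 1`, as when `f` is constant off a discrete set with a constant
  of modulus at most one; the quotient is then the junk value `x / 0 = 0`. -/
  push Not at hpos
  refine ⟨∅, ⟨Set.empty_subset _, by simp⟩,
    tendsto_div_rpow_div_of_eventually_eq_zero (by positivity)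
      (Eventually.filter_mono inf_le_left ?_)⟩
  filter_upwards [eventually_ge_atTop 1] with r hr
  have hrc : 1 ≤ r + ‖c‖ := by linarith [norm_nonneg c]
  rw [nevT_eq_characteristic hf' (by linarith)]
  exact (hpos _ hrc).antisymm (characteristic_nonneg hrc)
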